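/- Let D be a dictionary in a real Hilbert space X whose symmetric convex hull co(D) is compact, let f ∈ X, and let h ∈ X with ‖h‖_{L1(D)} < ∞. Then any sequence (f_n) produced by the orthogonal greedy algorithm with target f satisfies ‖f − f_n‖² ≤ ‖f − h‖² + 4 ((n! V_n)^{2/n} / n) · ‖h‖²_{L1(D)} · ε_n(co(D))² for all n ≥ 1. -/

import Mathlib

open scoped RealInnerProductSpace

/-- Dyadic entropy number: infimum of all `ε > 0` such that `K` is covered by `2^n`
balls of radius `ε`. -/
noncomputable def entropyNumber {X : Type*} [NormedAddCommGroup X] (n : ℕ) (K : Set X) : ℝ :=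
  sInf {ε : ℝ | 0 < ε ∧ ∃ c : Fin (2 ^ n) → X, K ⊆ ⋃ i, Metric.closedBall (c i) ε}

/-- Symmetric (absolutely) convex hull: closure of the set of finite sums `∑ cᵢ gᵢ`
with `gᵢ ∈ K` and `∑ |cᵢ| ≤ 1`. -/
noncomputable def symConvexHull {X : Type*} [NormedAddCommGroup X] [NormedSpace ℝ X]
    (K : Set X) : Set X :=
  closure {x : X | ∃ (m : ℕ) (c : Fin m → ℝ) (g : Fin m → X),
    (∀ i, g i ∈ K) ∧ (∑ i, |c i|) ≤ 1 ∧ x = ∑ i, c i • g i}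

/-- Volume of the unit Euclidean ball in `ℝⁿ`. -/
noncomputable def unitBallVol (n : ℕ) : ℝ :=
  Real.pi ^ ((n : ℝ) / 2) / Real.Gamma ((n : ℝ) / 2 + 1)

/-- Span of the first `n` terms of a sequence. -/
noncomputable def spanFirst {X : Type*} [NormedAddCommGroup X] [NormedSpace ℝ X]
    (f : ℕ → X) (n : ℕ) : Submodule ℝ X :=
  Submodule.span ℝ (f '' {i | i < n})

/-- The weak greedy algorithm with parameter `γ`: `f n` (the `(n+1)`-st iterate) lies in `K`
and its distance to the span of the previous iterates is at least `γ` times that of any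
other element of `K`. -/
def IsWeakGreedy {X : Type*} [NormedAddCommGroup X] [NormedSpace ℝ X]
    (γ : ℝ) (K : Set X) (f : ℕ → X) : Prop :=
  ∀ n : ℕ, f n ∈ K ∧ ∀ g ∈ K,
    γ * Metric.infDist g (spanFirst f n : Set X) ≤ Metric.infDist (f n) (spanFirst f n : Set X)

/-- The greedy error `σ_n(K) = sup_{f ∈ K} dist(f, span{f_1,…,f_n})`. -/
noncomputable def greedyError {X : Type*} [NormedAddCommGroup X] [NormedSpace ℝ X]
    (K : Set X) (f : ℕ → X) (n : ℕ) : ℝ :=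
  sSup ((fun g => Metric.infDist g (spanFirst f n : Set X)) '' K)

/-- Kolmogorov `n`-width. -/
noncomputable def kolmogorovWidth {X : Type*} [NormedAddCommGroup X] [NormedSpace ℝ X]
    (n : ℕ) (K : Set X) : ℝ :=
  sInf {d : ℝ | ∃ Y : Submodule ℝ X, FiniteDimensional ℝ Y ∧ Module.finrank ℝ Y ≤ n ∧
    d = sSup ((fun g => Metric.infDist g (Y : Set X)) '' K)}

/-- `f` admits an `ℓ¹` representation over the dictionary `D`. -/
def HasL1Rep {X : Type*} [NormedAddCommGroup X] [NormedSpace ℝ X] (D : Set X) (f : X) : Prop :=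
  ∃ (c : ℕ → ℝ) (g : ℕ → X), (∀ i, g i ∈ D) ∧ Summable (fun i => |c i|) ∧
    HasSum (fun i => c i • g i) f

/-- The variation norm `‖f‖_{L₁(D)}`. -/
noncomputable def varNorm {X : Type*} [NormedAddCommGroup X] [NormedSpace ℝ X]
    (D : Set X) (f : X) : ℝ :=
  sInf {t : ℝ | ∃ (c : ℕ → ℝ) (g : ℕ → X), (∀ i, g i ∈ D) ∧ Summable (fun i => |c i|) ∧
    HasSum (fun i => c i • g i) f ∧ t = ∑' i, |c i|}

/-- The orthogonal greedy algorithm with target `f`: `fa 0 = 0`; at each step `g n ∈ D`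
maximizes `|⟨g, f - fa n⟩|` over `D`, and `fa (n+1)` is the orthogonal projection of `f`
onto `span{g 0, …, g n}`. -/
def IsOGA {X : Type*} [NormedAddCommGroup X] [InnerProductSpace ℝ X]
    (D : Set X) (f : X) (g fa : ℕ → X) : Prop :=
  fa 0 = 0 ∧ ∀ n : ℕ,
    g n ∈ D ∧ (∀ h ∈ D, |⟪h, f - fa n⟫| ≤ |⟪g n, f - fa n⟫|) ∧
    fa (n + 1) ∈ Submodule.span ℝ (g '' {i | i ≤ n}) ∧
    ∀ w ∈ Submodule.span ℝ (g '' {i | i ≤ n}), ⟪f - fa (n + 1), w⟫ = 0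

/-- Best `n`-term approximation error `E_n(f, D)`. -/
noncomputable def bestNTermError {X : Type*} [NormedAddCommGroup X] [NormedSpace ℝ X]
    (D : Set X) (n : ℕ) (f : X) : ℝ :=
  sInf {r : ℝ | ∃ (c : Fin n → ℝ) (g : Fin n → X), (∀ i, g i ∈ D) ∧ r = ‖f - ∑ i, c i • g i‖}

/-- The K-functional `K(t, g)` between `X` and `L₁(D)`. -/
noncomputable def Kfunctional {X : Type*} [NormedAddCommGroup X] [NormedSpace ℝ X]
    (D : Set X) (t : ℝ) (gg : X) : ℝ :=
  sInf {s : ℝ | ∃ h : X, HasL1Rep D h ∧ s = ‖gg - h‖ + t * varNorm D h}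

/-- The interpolation norm `‖g‖_θ = sup_{t > 0} t^{-θ} K(t, g)`. -/
noncomputable def interpNorm {X : Type*} [NormedAddCommGroup X] [NormedSpace ℝ X]
    (D : Set X) (θ : ℝ) (gg : X) : ℝ :=
  sSup ((fun t => t ^ (-θ) * Kfunctional D t gg) '' Set.Ioi (0 : ℝ))

/-!
Let `rₖ = f - fa k`, `aₖ = ‖rₖ‖² - ‖f - h‖²`, `M = varNorm D h`, and let `dₖ` be the length of the
`k`-th Gram–Schmidt vector of the selected dictionary elements. The greedy selection rule gives
`aₖ ≤ 2 M |⟪gₖ, rₖ⟫|`, while orthogonality of the projections gives `⟪gₖ, rₖ⟫² ≤ dₖ² (aₖ - aₖ₊₁)`.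
Hence `1 / aₖ₊₁ - 1 / aₖ ≥ 1 / (2 M dₖ)²`; summing over `k < n` and comparing the harmonic with
the geometric mean yields `(n aₙ)ⁿ ≤ ∏ (2 M dₖ)²`. Finally `∏ dₖ` is the determinant of the
coordinates of the selected elements in their Gram–Schmidt frame, and comparing volumes controls
it: in that frame the image of the `ℓ¹` ball under `x ↦ ∑ xₖ gₖ`, which lies in the symmetric
convex hull of `D`, has volume `(2ⁿ / n!) ∏ dₖ`, so a cover of the hull by `2ⁿ` balls of radius
`ε` forces `∏ dₖ ≤ n! Vₙ εⁿ`.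
-/

open InnerProductSpace MeasureTheory Metric
open scoped Nat

section Entropy

variable {X : Type*} [NormedAddCommGroup X]

lemma entropyNumber_nonneg (n : ℕ) (K : Set X) : 0 ≤ entropyNumber n K :=
  Real.sInf_nonneg fun _ hε ↦ hε.1.le

lemma entropyNumber_mem_closure {K : Set X} (hK : Bornology.IsBounded K) (n : ℕ) :
    entropyNumber n K ∈
      closure {ε : ℝ | 0 < ε ∧ ∃ c : Fin (2 ^ n) → X, K ⊆ ⋃ i, closedBall (c i) ε} := by
  refine csInf_mem_closure ?_ ⟨0, fun _ hε ↦ hε.1.le⟩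
  obtain ⟨R, hR, hKR⟩ := hK.subset_closedBall_lt 0 0
  exact ⟨R, hR, fun _ ↦ 0, hKR.trans (Set.subset_iUnion (fun _ : Fin (2 ^ n) ↦ closedBall 0 R) 0)⟩

end Entropy

section Volume

variable {ι κ : Type*} [Fintype ι] [Fintype κ]

lemma unitBallVol_pos (n : ℕ) : 0 < unitBallVol n :=
  div_pos (Real.rpow_pos_of_pos Real.pi_pos _) (Real.Gamma_pos_of_pos (by positivity))

lemma volume_real_closedBall_eq_unitBallVol_mul (x : EuclideanSpace ℝ ι) {r : ℝ} (hr : 0 ≤ r) :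
    volume.real (closedBall x r) = unitBallVol (Fintype.card ι) * r ^ Fintype.card ι := by
  cases isEmpty_or_nonempty ι with
  | inl _ =>
    have huniv : closedBall x r = WithLp.ofLp ⁻¹' (Set.univ : Set (ι → ℝ)) := by
      ext y; simp [Subsingleton.elim y x, hr]
    rw [huniv, (PiLp.volume_preserving_ofLp ι).measureReal_preimage nullMeasurableSet_univ]
    simp [measureReal_def, volume_pi, unitBallVol]
  | inr _ =>
    have hpi : √Real.pi ^ Fintype.card ι = Real.pi ^ ((Fintype.card ι : ℝ) / 2) := by
      rw [Real.sqrt_eq_rpow, ← Real.rpow_natCast, ← Real.rpow_mul Real.pi_pos.le]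
      ring_nf
    rw [measureReal_def, EuclideanSpace.volume_closedBall, hpi, ← unitBallVol, ENNReal.toReal_mul,
      ENNReal.toReal_pow, ENNReal.toReal_ofReal hr, ENNReal.toReal_ofReal (unitBallVol_pos _).le,
      mul_comm]

lemma volume_real_le_of_subset_iUnion_closedBall {s : Set (EuclideanSpace ℝ ι)} {ε : ℝ}
    (hε : 0 ≤ ε) {c : κ → EuclideanSpace ℝ ι} (hs : s ⊆ ⋃ j, closedBall (c j) ε) :
    volume.real s ≤ Fintype.card κ * (unitBallVol (Fintype.card ι) * ε ^ Fintype.card ι) := by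
  calc volume.real s
      ≤ volume.real (⋃ j, closedBall (c j) ε) :=
        measureReal_mono hs
          (Bornology.isBounded_iUnion.2 fun _ ↦ isBounded_closedBall).measure_lt_top.ne
    _ ≤ ∑ j, volume.real (closedBall (c j) ε) := measureReal_iUnion_fintype_le _
    _ = Fintype.card κ * (unitBallVol (Fintype.card ι) * ε ^ Fintype.card ι) := by
        simp [volume_real_closedBall_eq_unitBallVol_mul _ hε]

variable (ι) in
lemma volume_real_sum_abs_lt_one :
    volume.real {x : EuclideanSpace ℝ ι | ∑ i, |x i| < 1} =
      2 ^ Fintype.card ι / (Fintype.card ι)! := by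
  have hpi : volume {x : ι → ℝ | ∑ i, |x i| < 1} =
      ENNReal.ofReal (2 ^ Fintype.card ι / (Fintype.card ι)!) := by
    simpa [Real.Gamma_nat_eq_factorial, one_add_one_eq_two, Real.Gamma_two] using
      volume_sum_rpow_lt_one ι le_rfl
  have hmeas : MeasurableSet {x : ι → ℝ | ∑ i, |x i| < 1} :=
    measurableSet_lt (by fun_prop) measurable_const
  have hpre := (PiLp.volume_preserving_ofLp ι).measureReal_preimage hmeas.nullMeasurableSet
  rw [measureReal_def volume {x : ι → ℝ | _}, hpi, ENNReal.toReal_ofReal (by positivity)] at hpre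
  exact hpre

lemma abs_det_mul_two_pow_le_of_cover (T : EuclideanSpace ℝ ι →ₗ[ℝ] EuclideanSpace ℝ ι) {ε : ℝ}
    (hε : 0 ≤ ε) {c : κ → EuclideanSpace ℝ ι}
    (hT : T '' {x | ∑ i, |x i| < 1} ⊆ ⋃ j, closedBall (c j) ε) :
    |LinearMap.det T| * 2 ^ Fintype.card ι ≤
      Fintype.card κ *
        ((Fintype.card ι)! * unitBallVol (Fintype.card ι) * ε ^ Fintype.card ι) := by
  have hvol := volume_real_le_of_subset_iUnion_closedBall hε hT
  rw [measureReal_def, Measure.addHaar_image_linearMap, ENNReal.toReal_mul,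
    ENNReal.toReal_ofReal (abs_nonneg _), ← measureReal_def, volume_real_sum_abs_lt_one,
    ← mul_div_assoc, div_le_iff₀ (by positivity)] at hvol
  linarith

end Volume

section Hull

variable {ι κ X : Type*} [Fintype ι] [Fintype κ] [NormedAddCommGroup X]

lemma sum_smul_mem_symConvexHull [NormedSpace ℝ X] {D : Set X} {v : ι → X} (hv : ∀ i, v i ∈ D)
    {x : ι → ℝ} (hx : ∑ i, |x i| ≤ 1) : ∑ i, x i • v i ∈ symConvexHull D := by
  let σ := (Fintype.equivFin ι).symm
  refine subset_closure ⟨Fintype.card ι, x ∘ σ, v ∘ σ, fun i ↦ hv (σ i), ?_, ?_⟩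
  · exact (σ.sum_comp fun i ↦ |x i|).trans_le hx
  · exact (σ.sum_comp fun i ↦ x i • v i).symm

variable [InnerProductSpace ℝ X]

lemma dist_toLp_inner_le_of_orthonormal {e : ι → X} (he : Orthonormal ℝ e) (x y : X) :
    dist (WithLp.toLp 2 fun i ↦ ⟪e i, x⟫ : EuclideanSpace ℝ ι) (WithLp.toLp 2 fun i ↦ ⟪e i, y⟫) ≤
      dist x y := by
  rw [EuclideanSpace.dist_eq, dist_eq_norm x y]
  refine Real.sqrt_le_iff.2 ⟨norm_nonneg _, ?_⟩
  calc ∑ i, dist ⟪e i, x⟫ ⟪e i, y⟫ ^ 2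
      = ∑ i, ‖⟪e i, x - y⟫‖ ^ 2 := by simp only [dist_eq_norm, inner_sub_right]
    _ ≤ ‖x - y‖ ^ 2 := he.sum_inner_products_le _

lemma abs_det_inner_mul_two_pow_le_of_cover [DecidableEq ι] {e : ι → X} (he : Orthonormal ℝ e)
    {D : Set X} {v : ι → X} (hv : ∀ i, v i ∈ D) {ε : ℝ} (hε : 0 ≤ ε) {c : κ → X}
    (hc : symConvexHull D ⊆ ⋃ j, closedBall (c j) ε) :
    |(Matrix.of fun i j ↦ ⟪e i, v j⟫).det| * 2 ^ Fintype.card ι ≤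
      Fintype.card κ *
        ((Fintype.card ι)! * unitBallVol (Fintype.card ι) * ε ^ Fintype.card ι) := by
  set A : Matrix ι ι ℝ := Matrix.of fun i j ↦ ⟪e i, v j⟫ with hA
  have hdet : LinearMap.det A.toEuclideanLin = A.det := by
    rw [Matrix.toEuclideanLin_eq_toLin_orthonormal, LinearMap.det_toLin]
  have hcoord (x : EuclideanSpace ℝ ι) :
      A.toEuclideanLin x = WithLp.toLp 2 fun i ↦ ⟪e i, ∑ j, x j • v j⟫ := by
    ext i
    simp [hA, Matrix.mulVec, dotProduct, inner_sum, inner_smul_right, mul_comm]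
  rw [← hdet]
  refine abs_det_mul_two_pow_le_of_cover (c := fun j ↦ WithLp.toLp 2 fun i ↦ ⟪e i, c j⟫)
    A.toEuclideanLin hε ?_
  rintro _ ⟨x, hx, rfl⟩
  obtain ⟨j, hj⟩ := Set.mem_iUnion.1 (hc (sum_smul_mem_symConvexHull hv hx.le))
  exact Set.mem_iUnion.2 ⟨j, hcoord x ▸ (dist_toLp_inner_le_of_orthonormal he _ _).trans hj⟩

lemma abs_det_inner_le_entropyNumber_pow {n : ℕ} {e : Fin n → X} (he : Orthonormal ℝ e) {D : Set X}
    (hD : Bornology.IsBounded (symConvexHull D)) {v : Fin n → X} (hv : ∀ i, v i ∈ D) :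
    |(Matrix.of fun i j ↦ ⟪e i, v j⟫).det| ≤
      n ! * unitBallVol n * entropyNumber n (symConvexHull D) ^ n := by
  have hclosed : IsClosed {ε : ℝ | |(Matrix.of fun i j ↦ ⟪e i, v j⟫).det| ≤
      n ! * unitBallVol n * ε ^ n} := isClosed_le continuous_const (by fun_prop)
  refine closure_minimal ?_ hclosed (entropyNumber_mem_closure hD n)
  rintro ε ⟨hε, c, hc⟩
  have hcover := abs_det_inner_mul_two_pow_le_of_cover he hv hε.le hc
  simp only [Fintype.card_fin, Nat.cast_pow, Nat.cast_ofNat] at hcover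
  exact le_of_mul_le_mul_right (by linarith) (by positivity : (0 : ℝ) < 2 ^ n)

end Hull

section GramSchmidt

variable {𝕜 E ι : Type*} [RCLike 𝕜] [NormedAddCommGroup E] [InnerProductSpace 𝕜 E]
  [LinearOrder ι] [LocallyFiniteOrderBot ι] [WellFoundedLT ι]

variable (𝕜) in
lemma sub_gramSchmidt_mem_span (v : ι → E) (k : ι) :
    v k - gramSchmidt 𝕜 v k ∈ Submodule.span 𝕜 (v '' Set.Iio k) := by
  rw [← span_gramSchmidt_Iio 𝕜, sub_eq_iff_eq_add'.2 (gramSchmidt_def'' 𝕜 v k)]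
  exact Submodule.sum_smul_mem _ _ fun i hi ↦
    Submodule.subset_span (Set.mem_image_of_mem _ (Finset.mem_Iio.1 hi))

variable (𝕜) in
lemma inner_gramSchmidt_self (v : ι → E) (k : ι) :
    inner 𝕜 (gramSchmidt 𝕜 v k) (v k) = (‖gramSchmidt 𝕜 v k‖ : 𝕜) ^ 2 := by
  conv_lhs => rw [gramSchmidt_def'' 𝕜 v k]
  rw [inner_add_right, inner_sum, Finset.sum_eq_zero, inner_self_eq_norm_sq_to_K, add_zero]
  intro i hi
  rw [inner_smul_right, gramSchmidt_orthogonal 𝕜 v (Finset.mem_Iio.1 hi).ne', mul_zero]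

variable {X : Type*} [NormedAddCommGroup X] [InnerProductSpace ℝ X]

lemma det_inner_gramSchmidtNormed (v : ℕ → X) (n : ℕ) :
    (Matrix.of fun i j : Fin n ↦ ⟪gramSchmidtNormed ℝ v i, v j⟫).det =
      ∏ k ∈ Finset.range n, ‖gramSchmidt ℝ v k‖ := by
  rw [Matrix.det_of_isUpperTriangular, Finset.prod_range]
  · refine Finset.prod_congr rfl fun i _ ↦ ?_
    rw [Matrix.of_apply, gramSchmidtNormed, real_inner_smul_left, inner_gramSchmidt_self,
      inv_mul_eq_div, sq]
    exact mul_self_div_self _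
  · intro i j hij
    have hinner : ⟪gramSchmidt ℝ v i, v j⟫ = 0 := gramSchmidt_inv_triangular ℝ v hij
    rw [Matrix.of_apply, gramSchmidtNormed, real_inner_smul_left, hinner, mul_zero]

lemma prod_norm_gramSchmidt_le_entropyNumber_pow {D : Set X}
    (hD : Bornology.IsBounded (symConvexHull D)) {v : ℕ → X} (hv : ∀ k, v k ∈ D) (n : ℕ) :
    ∏ k ∈ Finset.range n, ‖gramSchmidt ℝ v k‖ ≤
      n ! * unitBallVol n * entropyNumber n (symConvexHull D) ^ n := by
  by_cases hne : ∀ k < n, gramSchmidt ℝ v k ≠ 0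
  · have he : Orthonormal ℝ fun i : Fin n ↦ gramSchmidtNormed ℝ v i :=
      (gramSchmidtNormed_orthonormal' v).comp
        (fun i : Fin n ↦ ⟨i, by simpa [gramSchmidtNormed] using hne i i.2⟩)
        fun i j hij ↦ Fin.ext (congrArg Subtype.val hij)
    rw [← det_inner_gramSchmidtNormed]
    exact (le_abs_self _).trans (abs_det_inner_le_entropyNumber_pow he hD fun i ↦ hv i)
  · push Not at hne
    obtain ⟨k, hk, hk0⟩ := hne
    rw [Finset.prod_eq_zero (Finset.mem_range.2 hk) (by rw [hk0, norm_zero])]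
    have := unitBallVol_pos n
    have := entropyNumber_nonneg n (symConvexHull D)
    positivity

end GramSchmidt

section VarNorm

variable {X Y : Type*} [NormedAddCommGroup X] [NormedSpace ℝ X] [NormedAddCommGroup Y]
  [NormedSpace ℝ Y]

lemma varNorm_nonneg (D : Set X) (h : X) : 0 ≤ varNorm D h :=
  Real.sInf_nonneg fun _ ⟨_, _, _, _, _, ht⟩ ↦ ht ▸ tsum_nonneg fun _ ↦ abs_nonneg _

lemma HasL1Rep.norm_map_le_varNorm_mul {D : Set X} {h : X} (hh : HasL1Rep D h) (T : X →L[ℝ] Y)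
    {s : ℝ} (hT : ∀ v ∈ D, ‖T v‖ ≤ s) : ‖T h‖ ≤ varNorm D h * s := by
  have hrep {c : ℕ → ℝ} {g : ℕ → X} (hg : ∀ i, g i ∈ D) (hc : Summable fun i ↦ |c i|)
      (hsum : HasSum (fun i ↦ c i • g i) h) : ‖T h‖ ≤ (∑' i, |c i|) * s := by
    refine (hsum.mapL T).norm_le_of_bounded (hc.hasSum.mul_right s) fun i ↦ ?_
    rw [map_smul, norm_smul, Real.norm_eq_abs]
    exact mul_le_mul_of_nonneg_left (hT _ (hg i)) (abs_nonneg _)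
  obtain ⟨c, g, hg, hc, hsum⟩ := hh
  have hs : 0 ≤ s := (norm_nonneg _).trans (hT _ (hg 0))
  rcases hs.eq_or_lt with rfl | hs
  · simpa using hrep hg hc hsum
  · rw [← div_le_iff₀ hs]
    refine le_csInf ⟨_, c, g, hg, hc, hsum, rfl⟩ ?_
    rintro _ ⟨c', g', hg', hc', hsum', rfl⟩
    exact (div_le_iff₀ hs).2 (hrep hg' hc' hsum')

end VarNorm

section Recursion

variable {a b : ℕ → ℝ} {n : ℕ}

lemma inv_le_inv_sub_inv_of_sq_le_mul_sub {x y β : ℝ} (hy : 0 < y) (hyx : y ≤ x)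
    (hβ : x ^ 2 ≤ β * (x - y)) : β⁻¹ ≤ y⁻¹ - x⁻¹ := by
  have hx : 0 < x := hy.trans_le hyx
  have hβ0 : 0 < β := pos_of_mul_pos_left ((pow_pos hx 2).trans_le hβ) (sub_nonneg.2 hyx)
  rw [inv_sub_inv hy.ne' hx.ne', inv_eq_one_div, div_le_div_iff₀ hβ0 (by positivity)]
  nlinarith

lemma mul_pow_le_prod_of_sq_le_mul_sub (ha : Antitone a) (hpos : 0 < a n)
    (hab : ∀ k < n, a k ^ 2 ≤ b k * (a k - a (k + 1))) :
    (n * a n) ^ n ≤ ∏ k ∈ Finset.range n, b k := by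
  rcases n.eq_zero_or_pos with rfl | hn
  · simp
  have ha_pos (k : ℕ) (hk : k ≤ n) : 0 < a k := hpos.trans_le (ha hk)
  have hb (k : ℕ) (hk : k ∈ Finset.range n) : 0 < b k := by
    have hk' := Finset.mem_range.1 hk
    exact pos_of_mul_pos_left ((pow_pos (ha_pos k hk'.le) 2).trans_le (hab k hk'))
      (sub_nonneg.2 (ha k.le_succ))
  have hsum_pos : 0 < ∑ k ∈ Finset.range n, (b k)⁻¹ :=
    Finset.sum_pos (fun k hk ↦ inv_pos.2 (hb k hk)) (Finset.nonempty_range_iff.2 hn.ne')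
  have hsum : ∑ k ∈ Finset.range n, (b k)⁻¹ ≤ (a n)⁻¹ :=
    calc ∑ k ∈ Finset.range n, (b k)⁻¹
        ≤ ∑ k ∈ Finset.range n, ((a (k + 1))⁻¹ - (a k)⁻¹) :=
          Finset.sum_le_sum fun k hk ↦ inv_le_inv_sub_inv_of_sq_le_mul_sub
            (ha_pos _ (Finset.mem_range.1 hk)) (ha k.le_succ) (hab k (Finset.mem_range.1 hk))
      _ = (a n)⁻¹ - (a 0)⁻¹ := Finset.sum_range_sub (fun k ↦ (a k)⁻¹) n
      _ ≤ (a n)⁻¹ := sub_le_self _ (inv_nonneg.2 (ha_pos 0 n.zero_le).le)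
  have hmean : n / ∑ k ∈ Finset.range n, (b k)⁻¹ ≤ (∏ k ∈ Finset.range n, b k) ^ (n : ℝ)⁻¹ := by
    simpa using Real.harm_mean_le_geom_mean (Finset.range n) (Finset.nonempty_range_iff.2 hn.ne')
      (fun _ ↦ 1) b (fun _ _ ↦ one_pos) (by simpa using hn) hb
  calc (n * a n) ^ n
      ≤ (n / ∑ k ∈ Finset.range n, (b k)⁻¹) ^ n := by
        rw [div_eq_mul_inv]
        gcongr
        exact le_inv_of_le_inv₀ hsum_pos hsum
    _ ≤ ((∏ k ∈ Finset.range n, b k) ^ (n : ℝ)⁻¹) ^ n := by gcongr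
    _ = ∏ k ∈ Finset.range n, b k := Real.rpow_inv_natCast_pow (Finset.prod_pos hb).le hn.ne'

lemma le_rpow_div_mul_sq_of_mul_pow_le {x y W : ℝ} (hn : n ≠ 0) (hW : 0 ≤ W)
    (hx : (n * x) ^ n ≤ (W * y ^ n) ^ 2) : x ≤ W ^ ((2 : ℝ) / n) / n * y ^ 2 := by
  have hn' : (0 : ℝ) < n := mod_cast hn.pos
  have hroot : (W ^ ((2 : ℝ) / n)) ^ n = W ^ 2 := by
    rw [← Real.rpow_mul_natCast hW, div_mul_cancel₀ _ hn'.ne', Real.rpow_two]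
  have hpow : (n * x) ^ n ≤ (W ^ ((2 : ℝ) / n) * y ^ 2) ^ n :=
    hx.trans_eq (by rw [mul_pow, mul_pow, hroot, pow_right_comm])
  rw [div_mul_eq_mul_div, le_div_iff₀' hn']
  exact le_of_pow_le_pow_left₀ hn (by positivity) hpow

end Recursion

namespace IsOGA

variable {X : Type*} [NormedAddCommGroup X] [InnerProductSpace ℝ X] {D : Set X} {f h : X}
  {g fa : ℕ → X}

lemma mem_span (H : IsOGA D f g fa) (k : ℕ) : fa k ∈ Submodule.span ℝ (g '' Set.Iio k) := by
  cases k with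
  | zero => simp [H.1]
  | succ k => exact Order.Iio_succ k ▸ (H.2 k).2.2.1

lemma residual_mem_orthogonal (H : IsOGA D f g fa) (k : ℕ) :
    f - fa k ∈ (Submodule.span ℝ (g '' Set.Iio k))ᗮ := by
  cases k with
  | zero => simp
  | succ k => exact (Submodule.mem_orthogonal' _ _).2 (Order.Iio_succ k ▸ (H.2 k).2.2.2)

lemma inner_residual_eq_zero_of_mem_span (H : IsOGA D f g fa) {k : ℕ} {w : X}
    (hw : w ∈ Submodule.span ℝ (g '' Set.Iio k)) : ⟪w, f - fa k⟫ = 0 :=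
  Submodule.inner_right_of_mem_orthogonal hw (H.residual_mem_orthogonal k)

lemma norm_residual_sq_eq_add (H : IsOGA D f g fa) (k : ℕ) :
    ‖f - fa k‖ ^ 2 = ‖f - fa (k + 1)‖ ^ 2 + ‖fa (k + 1) - fa k‖ ^ 2 := by
  have hstep : fa (k + 1) - fa k ∈ Submodule.span ℝ (g '' Set.Iio (k + 1)) :=
    sub_mem (H.mem_span _) (Submodule.span_mono (by gcongr; simp) (H.mem_span k))
  rw [← sub_add_sub_cancel f (fa (k + 1)) (fa k), norm_add_sq_real, real_inner_comm,
    H.inner_residual_eq_zero_of_mem_span hstep, mul_zero, add_zero]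

lemma antitone_norm_residual_sq (H : IsOGA D f g fa) : Antitone fun k ↦ ‖f - fa k‖ ^ 2 :=
  antitone_nat_of_succ_le fun k ↦ by
    rw [H.norm_residual_sq_eq_add k]
    exact le_add_of_nonneg_right (sq_nonneg _)

lemma inner_residual_eq_inner_gramSchmidt (H : IsOGA D f g fa) (k : ℕ) :
    ⟪g k, f - fa k⟫ = ⟪gramSchmidt ℝ g k, fa (k + 1) - fa k⟫ := by
  have hlast : ⟪gramSchmidt ℝ g k, f - fa (k + 1)⟫ = 0 :=
    H.inner_residual_eq_zero_of_mem_span (Order.Iio_succ k ▸ gramSchmidt_mem_span ℝ g le_rfl)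
  calc ⟪g k, f - fa k⟫
      = ⟪gramSchmidt ℝ g k, f - fa k⟫ + ⟪g k - gramSchmidt ℝ g k, f - fa k⟫ := by
        rw [← inner_add_left, add_sub_cancel]
    _ = ⟪gramSchmidt ℝ g k, f - fa k⟫ := by
        rw [H.inner_residual_eq_zero_of_mem_span (sub_gramSchmidt_mem_span ℝ g k), add_zero]
    _ = ⟪gramSchmidt ℝ g k, fa (k + 1) - fa k⟫ := by
        rw [← sub_add_sub_cancel f (fa (k + 1)) (fa k), inner_add_right, hlast, zero_add]

lemma inner_residual_sq_le (H : IsOGA D f g fa) (k : ℕ) :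
    ⟪g k, f - fa k⟫ ^ 2 ≤
      ‖gramSchmidt ℝ g k‖ ^ 2 * (‖f - fa k‖ ^ 2 - ‖f - fa (k + 1)‖ ^ 2) := by
  rw [H.norm_residual_sq_eq_add k, add_sub_cancel_left, ← mul_pow,
    H.inner_residual_eq_inner_gramSchmidt]
  exact sq_le_sq.2 ((abs_real_inner_le_norm _ _).trans (le_abs_self _))

lemma norm_residual_sq_sub_le (H : IsOGA D f g fa) (hh : HasL1Rep D h) (k : ℕ) :
    ‖f - fa k‖ ^ 2 - ‖f - h‖ ^ 2 ≤ 2 * varNorm D h * |⟪g k, f - fa k⟫| := by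
  have hvar : ⟪h, f - fa k⟫ ≤ varNorm D h * |⟪g k, f - fa k⟫| := by
    rw [real_inner_comm]
    refine (le_abs_self _).trans (hh.norm_map_le_varNorm_mul (innerSL ℝ (f - fa k)) fun v hv ↦ ?_)
    simpa only [innerSL_apply_apply, real_inner_comm, Real.norm_eq_abs] using (H.2 k).2.1 v hv
  have hself : ‖f - fa k‖ ^ 2 = ⟪h, f - fa k⟫ + ⟪f - h, f - fa k⟫ := by
    rw [← inner_add_left, add_sub_cancel, ← real_inner_self_eq_norm_sq, inner_sub_left,
      H.inner_residual_eq_zero_of_mem_span (H.mem_span k), sub_zero]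
  have hyoung : 2 * ⟪f - h, f - fa k⟫ ≤ ‖f - h‖ ^ 2 + ‖f - fa k‖ ^ 2 :=
    calc 2 * ⟪f - h, f - fa k⟫ ≤ 2 * (‖f - h‖ * ‖f - fa k‖) := by
          gcongr; exact real_inner_le_norm _ _
      _ ≤ ‖f - h‖ ^ 2 + ‖f - fa k‖ ^ 2 := by
          rw [← mul_assoc]; exact two_mul_le_add_sq _ _
  linarith

lemma mul_norm_residual_sq_sub_pow_le (H : IsOGA D f g fa) (hh : HasL1Rep D h) {n : ℕ}
    (hpos : 0 < ‖f - fa n‖ ^ 2 - ‖f - h‖ ^ 2) :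
    (n * (‖f - fa n‖ ^ 2 - ‖f - h‖ ^ 2)) ^ n ≤
      ((2 * varNorm D h) ^ n * ∏ k ∈ Finset.range n, ‖gramSchmidt ℝ g k‖) ^ 2 := by
  have hanti : Antitone fun k ↦ ‖f - fa k‖ ^ 2 - ‖f - h‖ ^ 2 := fun _ _ hkl ↦
    sub_le_sub_right (H.antitone_norm_residual_sq hkl) _
  have hprod : ((2 * varNorm D h) ^ n * ∏ k ∈ Finset.range n, ‖gramSchmidt ℝ g k‖) ^ 2 =
      ∏ k ∈ Finset.range n, (2 * varNorm D h * ‖gramSchmidt ℝ g k‖) ^ 2 := by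
    rw [Finset.prod_pow, Finset.prod_mul_distrib, Finset.prod_const, Finset.card_range]
  rw [hprod]
  refine mul_pow_le_prod_of_sq_le_mul_sub hanti hpos fun k hk ↦ ?_
  calc (‖f - fa k‖ ^ 2 - ‖f - h‖ ^ 2) ^ 2
      ≤ (2 * varNorm D h * |⟪g k, f - fa k⟫|) ^ 2 :=
        pow_le_pow_left₀ (hpos.le.trans (hanti hk.le)) (H.norm_residual_sq_sub_le hh k) 2
    _ = (2 * varNorm D h) ^ 2 * ⟪g k, f - fa k⟫ ^ 2 := by rw [mul_pow, sq_abs]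
    _ ≤ (2 * varNorm D h) ^ 2 *
          (‖gramSchmidt ℝ g k‖ ^ 2 * (‖f - fa k‖ ^ 2 - ‖f - fa (k + 1)‖ ^ 2)) := by
        gcongr; exact H.inner_residual_sq_le k
    _ = _ := by ring

end IsOGA

theorem oga_error_sq_le_of_general_target_general {X : Type*} [NormedAddCommGroup X]
    [InnerProductSpace ℝ X] {D : Set X} (hD : Bornology.IsBounded (symConvexHull D)) {f h : X}
    (hh : HasL1Rep D h) {g fa : ℕ → X} (hoga : IsOGA D f g fa) {n : ℕ} (hn : 1 ≤ n) :
    ‖f - fa n‖ ^ 2 ≤ ‖f - h‖ ^ 2 + 4 * ((n ! * unitBallVol n) ^ ((2 : ℝ) / n) / n) *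
      varNorm D h ^ 2 * entropyNumber n (symConvexHull D) ^ 2 := by
  have hM := varNorm_nonneg D h
  have hV := unitBallVol_pos n
  set M := varNorm D h
  set ε := entropyNumber n (symConvexHull D)
  rw [← sub_le_iff_le_add']
  rcases le_or_gt (‖f - fa n‖ ^ 2 - ‖f - h‖ ^ 2) 0 with hneg | hpos
  · exact hneg.trans (by positivity)
  have hpow : (n * (‖f - fa n‖ ^ 2 - ‖f - h‖ ^ 2)) ^ n ≤
      (n ! * unitBallVol n * (2 * M * ε) ^ n) ^ 2 :=
    calc (n * (‖f - fa n‖ ^ 2 - ‖f - h‖ ^ 2)) ^ n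
        ≤ ((2 * M) ^ n * ∏ k ∈ Finset.range n, ‖gramSchmidt ℝ g k‖) ^ 2 :=
          hoga.mul_norm_residual_sq_sub_pow_le hh hpos
      _ ≤ ((2 * M) ^ n * (n ! * unitBallVol n * ε ^ n)) ^ 2 := by
          gcongr
          exact prod_norm_gramSchmidt_le_entropyNumber_pow hD (fun k ↦ (hoga.2 k).1) n
      _ = _ := by ring
  exact (le_rpow_div_mul_sq_of_mul_pow_le (by lia) (by positivity) hpow).trans_eq (by ring)

/-- OGA error bound for general targets `f` measured against any `h` of
finite variation norm (Corollary 4.2 of the paper). -/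
theorem oga_error_sq_le_of_general_target
    {X : Type*} [NormedAddCommGroup X] [InnerProductSpace ℝ X] [CompleteSpace X]
    (D : Set X) (hD : IsCompact (symConvexHull D))
    (f : X) (h : X) (hh : HasL1Rep D h)
    (g fa : ℕ → X) (hoga : IsOGA D f g fa) (n : ℕ) (hn : 1 ≤ n) :
    ‖f - fa n‖ ^ 2
      ≤ ‖f - h‖ ^ 2 + 4 * (((n.factorial : ℝ) * unitBallVol n) ^ ((2 : ℝ) / n) / n) *
          varNorm D h ^ 2 * entropyNumber n (symConvexHull D) ^ 2 :=
  oga_error_sq_le_of_general_target_general hD.isBounded hh hoga hn
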